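/- Let (A, t) be a C_k-algebra, let D₁ be a cyclic deductive system of A, and let a ∈ A. Then the smallest cyclic deductive system containing D₁ ∪ {a} equals {x ∈ A : there exists d ∈ D₁ such that d ∧ ⋀_{j=1}^{k} t^j(△a) ≤ x}. -/

import Mathlib

universe u

/-- Modal pseudocomplemented De Morgan algebra (mpM-algebra). -/
class MpM (A : Type u) extends DistribLattice A, BoundedOrder A where
  dm : A → A   -- De Morgan negation ∼
  ps : A → A   -- pseudocomplement *
  dm_dm : ∀ x : A, dm (dm x) = x
  dm_sup : ∀ x y : A, dm (x ⊔ y) = dm x ⊓ dm y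
  pseudo : ∀ a x : A, a ⊓ x = ⊥ ↔ x ≤ ps a
  modal : ∀ x : A, x ⊔ dm x ≤ x ⊔ ps x

open MpM

variable {A : Type u} [MpM A]

/-- ∇x = ∼(∼x ∧ x*) -/
def nabla (x : A) : A := dm (dm x ⊓ ps x)

/-- △x = ∼∇∼x -/
def tri (x : A) : A := dm (nabla (dm x))

/-- A C_k-algebra structure on an mpM-algebra `A`: an automorphism `t` with `t^k = id`. -/
structure CkStr (A : Type u) [MpM A] (k : ℕ) where
  t : A → A
  bij : Function.Bijective t
  map_inf : ∀ x y : A, t (x ⊓ y) = t x ⊓ t y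
  map_sup : ∀ x y : A, t (x ⊔ y) = t x ⊔ t y
  map_dm : ∀ x : A, t (dm x) = dm (t x)
  map_ps : ∀ x : A, t (ps x) = ps (t x)
  map_bot : t (⊥ : A) = ⊥
  map_top : t (⊤ : A) = ⊤
  periodic : ∀ x : A, t^[k] x = x

/-- Lattice filter: nonempty, upward closed, closed under binary meets. -/
def IsLatFilter (F : Set A) : Prop :=
  F.Nonempty ∧ (∀ x ∈ F, ∀ y : A, x ≤ y → y ∈ F) ∧ ∀ x ∈ F, ∀ y ∈ F, x ⊓ y ∈ F

/-- c-filter: a filter closed under △ and t. -/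
def IsCFilter {k : ℕ} (T : CkStr A k) (F : Set A) : Prop :=
  IsLatFilter F ∧ ∀ x ∈ F, tri x ∈ F ∧ T.t x ∈ F

/-- maximal c-filter: proper and not properly contained in a proper c-filter. -/
def IsMaxCFilter {k : ℕ} (T : CkStr A k) (N : Set A) : Prop :=
  IsCFilter T N ∧ N ≠ Set.univ ∧
    ∀ G : Set A, IsCFilter T G → G ≠ Set.univ → N ⊆ G → N = G

/-- prime filter -/
def IsPrimeFilter (P : Set A) : Prop :=
  IsLatFilter P ∧ P ≠ Set.univ ∧ ∀ x y : A, x ⊔ y ∈ P → x ∈ P ∨ y ∈ P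

/-- ultrafilter: maximal proper (lattice) filter -/
def IsUltraFilter (U : Set A) : Prop :=
  IsLatFilter U ∧ U ≠ Set.univ ∧
    ∀ G : Set A, IsLatFilter G → G ≠ Set.univ → U ⊆ G → U = G

/-- Birula–Rasiowa transformation φ(P) = A \ {∼x : x ∈ P}. -/
def brPhi (P : Set A) : Set A := Set.univ \ (dm '' P)

/-- a ⇁ b = (⋁_{i=1}^{k} ∇(∼ t^i(a))) ∨ b -/
def rimp {k : ℕ} (T : CkStr A k) (a b : A) : A :=
  ((Finset.Icc 1 k).sup fun i => nabla (dm (T.t^[i] a))) ⊔ b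

/-- cyclic deductive system -/
def IsCDS {k : ℕ} (T : CkStr A k) (D : Set A) : Prop :=
  (⊤ : A) ∈ D ∧ ∀ x ∈ D, ∀ y : A, rimp T x y ∈ D → y ∈ D

/-- maximal cyclic deductive system -/
def IsMaxCDS {k : ℕ} (T : CkStr A k) (M : Set A) : Prop :=
  IsCDS T M ∧ M ≠ Set.univ ∧
    ∀ G : Set A, IsCDS T G → G ≠ Set.univ → M ⊆ G → M = G

/-- the smallest cyclic deductive system containing `X` -/
def genCDS {k : ℕ} (T : CkStr A k) (X : Set A) : Set A :=
  ⋂₀ {D : Set A | IsCDS T D ∧ X ⊆ D}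

/-- K(A) = {x : t(x) = x and ∇x = x} -/
def Kset {k : ℕ} (T : CkStr A k) : Set A := {x : A | T.t x = x ∧ nabla x = x}

/-- consistency operator ∘x = ⋀_{i=0}^{k} t^i((∼x ∨ x) ∧ (x ∧ ∼x)*) -/
def cCirc {k : ℕ} (T : CkStr A k) (x : A) : A :=
  (Finset.Icc 0 k).inf fun i => T.t^[i] ((dm x ⊔ x) ⊓ ps (x ⊓ dm x))

/-- x → y = ∼((∼(x∨y))* ∧ (x∨y)) ∨ ((∼(x∧y))* ∧ (x∧y)) -/
def mpTo (x y : A) : A :=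
  dm (ps (dm (x ⊔ y)) ⊓ (x ⊔ y)) ⊔ (ps (dm (x ⊓ y)) ⊓ (x ⊓ y))

/-- x ⇒ y = (x → y) ∧ (∼y → ∼x) -/
def mpIff (x y : A) : A := mpTo x y ⊓ mpTo (dm y) (dm x)

theorem aux_dm_inf (x y : A) : dm (x ⊓ y) = dm x ⊔ dm y := by
  have h := dm_sup (dm x) (dm y)
  rw [dm_dm, dm_dm] at h
  rw [← h, dm_dm]

theorem aux_dm_anti {x y : A} (h : x ≤ y) : dm y ≤ dm x := by
  have h1 := dm_sup x y
  rw [sup_eq_right.2 h] at h1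
  rw [h1]; exact inf_le_left

theorem aux_dm_top : dm (⊤ : A) = ⊥ := by
  apply le_bot_iff.1
  have h := aux_dm_anti (le_top : dm (⊥ : A) ≤ ⊤)
  rwa [dm_dm] at h

theorem aux_dm_bot : dm (⊥ : A) = ⊤ := by
  rw [← aux_dm_top, dm_dm]

theorem aux_inf_ps (x : A) : x ⊓ ps x = ⊥ := (pseudo x (ps x)).2 le_rfl

theorem aux_ps_anti {x y : A} (h : x ≤ y) : ps y ≤ ps x := by
  rw [← pseudo, ← le_bot_iff, ← aux_inf_ps y]
  exact inf_le_inf_right _ h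

theorem aux_tri (x : A) : tri x = x ⊓ ps (dm x) := by
  simp [tri, nabla, dm_dm]

theorem aux_tri_le (x : A) : tri x ≤ x := by rw [aux_tri]; exact inf_le_left

theorem aux_tri_mono {x y : A} (h : x ≤ y) : tri x ≤ tri y := by
  rw [aux_tri, aux_tri]
  exact inf_le_inf h (aux_ps_anti (aux_dm_anti h))

theorem aux_nabla (x : A) : nabla (dm x) = dm (tri x) := by simp [tri, dm_dm]

theorem aux_tri_dm (x : A) : tri x ⊓ dm (tri x) = ⊥ := by
  have hm := aux_dm_anti (modal (dm x))
  rw [dm_sup, dm_sup, dm_dm] at hm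
  rw [aux_tri, aux_dm_inf, inf_sup_left, ← le_bot_iff]
  refine sup_le ?_ ?_
  · rw [← aux_inf_ps (dm x)]
    exact le_inf inf_le_right (inf_le_left.trans inf_le_right)
  · rw [← aux_inf_ps (dm x)]
    refine le_inf ?_ (inf_le_left.trans inf_le_right)
    exact (le_inf (inf_le_left.trans inf_le_left) inf_le_right).trans (hm.trans inf_le_right)

theorem aux_tri_fix {x : A} (h : x ⊓ dm x = ⊥) : tri x = x := by
  rw [aux_tri]
  exact inf_eq_left.2 ((pseudo _ _).1 (by rw [inf_comm]; exact h))

theorem aux_tri_inf (x y : A) : tri x ⊓ tri y ≤ tri (x ⊓ y) := by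
  rw [aux_tri (x ⊓ y)]
  refine le_inf (inf_le_inf (aux_tri_le x) (aux_tri_le y)) ?_
  rw [← pseudo, aux_dm_inf, ← le_bot_iff, inf_sup_right, aux_tri, aux_tri]
  refine sup_le ?_ ?_
  · rw [← aux_inf_ps (dm x)]
    exact inf_le_inf_left _ (inf_le_left.trans inf_le_right)
  · rw [← aux_inf_ps (dm y)]
    exact inf_le_inf_left _ (inf_le_right.trans inf_le_right)

theorem aux_dm_finf (s : Finset ℕ) (f : ℕ → A) :
    dm (s.inf f) = s.sup fun i => dm (f i) := by
  induction s using Finset.induction_on with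
  | empty => simpa using aux_dm_top
  | insert a s ha ih => rw [Finset.inf_insert, Finset.sup_insert, aux_dm_inf, ih]

section
variable {k : ℕ} (T : CkStr A k)

theorem aux_t_inf (i : ℕ) (x y : A) : T.t^[i] (x ⊓ y) = T.t^[i] x ⊓ T.t^[i] y := by
  induction i with
  | zero => rfl
  | succ i ih => simp only [Function.iterate_succ_apply', ih, T.map_inf]

theorem aux_t_mono (i : ℕ) {x y : A} (h : x ≤ y) : T.t^[i] x ≤ T.t^[i] y := by
  rw [← inf_eq_left, ← aux_t_inf, inf_eq_left.2 h]

theorem aux_t_top (i : ℕ) : T.t^[i] (⊤ : A) = ⊤ := by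
  induction i with
  | zero => rfl
  | succ i ih => simp only [Function.iterate_succ_apply', ih, T.map_top]

theorem aux_t_tri (i : ℕ) (x : A) : T.t^[i] (tri x) = tri (T.t^[i] x) := by
  induction i with
  | zero => rfl
  | succ i ih =>
    simp only [Function.iterate_succ_apply', ih]
    simp only [aux_tri, T.map_inf, T.map_ps, T.map_dm]

theorem aux_t_finf (i : ℕ) (s : Finset ℕ) (f : ℕ → A) :
    T.t^[i] (s.inf f) = s.inf fun j => T.t^[i] (f j) := by
  induction s using Finset.induction_on with
  | empty => simpa using aux_t_top T i
  | insert a s ha ih => rw [Finset.inf_insert, Finset.inf_insert, aux_t_inf, ih]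

/-- The meet of all `t^j (△ a)`. -/
def auxM (a : A) : A := (Finset.Icc 1 k).inf fun j => T.t^[j] (tri a)

theorem aux_rimp (x y : A) : rimp T x y = dm (auxM T x) ⊔ y := by
  simp only [rimp, auxM, aux_dm_finf, aux_nabla, aux_t_tri]

theorem auxM_compl (x : A) : auxM T x ⊓ dm (auxM T x) = ⊥ := by
  rw [auxM, aux_dm_finf, Finset.sup_inf_distrib_left, ← le_bot_iff]
  refine Finset.sup_le fun i hi => ?_
  rw [aux_t_tri, ← aux_tri_dm (T.t^[i] x)]
  refine inf_le_inf_right _ ?_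
  rw [← aux_t_tri]
  exact Finset.inf_le (f := fun j => T.t^[j] (tri x)) hi

theorem auxM_compl' (x : A) : dm (auxM T x) ⊔ auxM T x = ⊤ := by
  have h := congrArg dm (auxM_compl T x)
  rwa [aux_dm_inf, dm_dm, aux_dm_bot] at h

theorem auxM_le (hk : 0 < k) (x : A) : auxM T x ≤ x := by
  have h : auxM T x ≤ T.t^[k] (tri x) :=
    Finset.inf_le (f := fun j => T.t^[j] (tri x)) (Finset.mem_Icc.2 ⟨hk, le_rfl⟩)
  rw [T.periodic] at h
  exact h.trans (aux_tri_le x)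

theorem auxM_mono {x y : A} (h : x ≤ y) : auxM T x ≤ auxM T y :=
  Finset.inf_mono_fun fun i _ => aux_t_mono T i (aux_tri_mono h)

theorem auxM_inf (x y : A) : auxM T x ⊓ auxM T y ≤ auxM T (x ⊓ y) := by
  refine Finset.le_inf fun i hi => ?_
  refine le_trans ?_ (aux_t_mono T i (aux_tri_inf x y))
  rw [aux_t_inf]
  exact inf_le_inf (Finset.inf_le (f := fun j => T.t^[j] (tri x)) hi)
    (Finset.inf_le (f := fun j => T.t^[j] (tri y)) hi)

theorem auxM_idem (a : A) : auxM T a ≤ auxM T (auxM T a) := by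
  refine Finset.le_inf fun i hi => ?_
  rw [aux_tri_fix (auxM_compl T a), auxM, aux_t_finf]
  refine Finset.le_inf fun j hj => ?_
  rw [Finset.mem_Icc] at hi hj
  rw [← Function.iterate_add_apply]
  by_cases h : i + j ≤ k
  · exact Finset.inf_le (f := fun j => T.t^[j] (tri a)) (Finset.mem_Icc.2 ⟨by omega, h⟩)
  · have e : i + j = (i + j - k) + k := by omega
    rw [e, Function.iterate_add_apply, T.periodic]
    exact Finset.inf_le (f := fun j => T.t^[j] (tri a))
      (Finset.mem_Icc.2 ⟨by omega, by omega⟩)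

theorem auxD_M {D : Set A} (hD : IsCDS T D) {x : A} (hx : x ∈ D) : auxM T x ∈ D :=
  hD.2 x hx _ (by rw [aux_rimp, auxM_compl']; exact hD.1)

theorem auxD_up (hk : 0 < k) {D : Set A} (hD : IsCDS T D) {x y : A} (hx : x ∈ D)
    (h : x ≤ y) : y ∈ D := by
  refine hD.2 x hx _ ?_
  have e : rimp T x y = ⊤ := by
    rw [aux_rimp, ← top_le_iff, ← auxM_compl' T x]
    exact sup_le_sup_left ((auxM_le T hk x).trans h) _
  rw [e]; exact hD.1

theorem auxD_inf (hk : 0 < k) {D : Set A} (hD : IsCDS T D) {x y : A} (hx : x ∈ D)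
    (hy : y ∈ D) : x ⊓ y ∈ D := by
  refine hD.2 x hx _ (auxD_up T hk hD hy ?_)
  rw [aux_rimp, sup_inf_left]
  refine le_inf ?_ le_sup_right
  refine le_top.trans ?_
  rw [← auxM_compl' T x]
  exact sup_le_sup_left (auxM_le T hk x) _

end

theorem stmt11 {k : ℕ} (hk : 0 < k) (T : CkStr A k) (D₁ : Set A)
    (hD₁ : IsCDS T D₁) (a : A) :
    genCDS T (D₁ ∪ {a}) =
      {x : A | ∃ d ∈ D₁, d ⊓ ((Finset.Icc 1 k).inf fun j => T.t^[j] (tri a)) ≤ x} := by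
  change _ = {x : A | ∃ d ∈ D₁, d ⊓ auxM T a ≤ x}
  apply Set.Subset.antisymm
  · refine Set.sInter_subset_of_mem ⟨⟨⟨⊤, hD₁.1, le_top⟩, ?_⟩, ?_⟩
    · rintro x ⟨d, hd, hx⟩ y ⟨d', hd', hy⟩
      rw [aux_rimp] at hy
      refine ⟨d' ⊓ auxM T d, auxD_inf T hk hD₁ hd' (auxD_M T hD₁ hd), ?_⟩
      have h1 : auxM T d ⊓ auxM T a ≤ auxM T x :=
        ((inf_le_inf_left _ (auxM_idem T a)).trans (auxM_inf T _ _)).trans (auxM_mono T hx)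
      have h2 : d' ⊓ auxM T d ⊓ auxM T a ≤ auxM T x ⊓ (dm (auxM T x) ⊔ y) :=
        le_inf ((inf_le_inf_right _ inf_le_right).trans h1)
          ((inf_le_inf_right _ inf_le_left).trans hy)
      refine h2.trans ?_
      rw [inf_sup_left, auxM_compl, bot_sup_eq]
      exact inf_le_right
    · rintro x (hx | hx)
      · exact ⟨x, hx, inf_le_left⟩
      · rw [Set.mem_singleton_iff] at hx
        subst hx
        exact ⟨⊤, hD₁.1, inf_le_right.trans (auxM_le T hk x)⟩
  · rintro x ⟨d, hd, hx⟩ D ⟨hD, hs⟩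
    exact auxD_up T hk hD
      (auxD_inf T hk hD (hs (Or.inl hd)) (auxD_M T hD (hs (Or.inr rfl)))) hx
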